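/- Multi-state estimate (Theorem 2.3): Let d ∈ {1,2,3} and N ≥ 1. Let s₁,…,s_N > 0 and unit vectors ξ⁽¹⁾,…,ξ⁽ᴺ⁾ ∈ ℝ^d satisfy Σⱼ sⱼ ξ⁽ʲ⁾ = 0. Let U⁽¹⁾,…,U⁽ᴺ⁾ ∈ 𝒢 with densities ρ⁽ʲ⁾, velocities v⁽ʲ⁾, magnetic fields B⁽ʲ⁾. For each j define α̂ⱼ = max{ ⟨ξ⁽ʲ⁾, v⁽ʲ⁾⟩ , (Σᵢ sᵢ)⁻¹ Σᵢ sᵢ ⟨ξ⁽ʲ⁾ − ξ⁽ⁱ⁾, (√ρ⁽ʲ⁾ v⁽ʲ⁾ + √ρ⁽ⁱ⁾ v⁽ⁱ⁾)/(√ρ⁽ʲ⁾ + √ρ⁽ⁱ⁾)⟩ } + 𝒞(U⁽ʲ⁾; ξ⁽ʲ⁾) + 2(Σᵢ sᵢ)⁻¹ Σᵢ sᵢ |B⁽ʲ⁾ − B⁽ⁱ⁾|/(√ρ⁽ʲ⁾ + √ρ⁽ⁱ⁾). Then for any reals αⱼ ≥ α̂ⱼ (j = 1,…,N) one has Σⱼ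 sⱼ αⱼ > 0, the state Ū = (Σⱼ sⱼ αⱼ)⁻¹ Σⱼ sⱼ (αⱼ U⁽ʲ⁾ − ⟨ξ⁽ʲ⁾, F(U⁽ʲ⁾)⟩) has positive density component, and for all v*, B* ∈ ℝ³: Ū·n* + |B*|²/2 ≥ −(v*·B*)·(Σⱼ sⱼ αⱼ)⁻¹ · Σⱼ sⱼ ⟨ξ⁽ʲ⁾, B⁽ʲ⁾⟩. Furthermore, if Σⱼ sⱼ ⟨ξ⁽ʲ⁾, B⁽ʲ⁾⟩ = 0 then Ū ∈ cl(𝒢*). -/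

import Mathlib

noncomputable section

open Finset

/-- An MHD state `U = (ρ, m, B, E)` viewed as a vector in `ℝ⁸`. -/
abbrev MHDState := Fin 8 → ℝ

namespace MHD

/-- Build a state from density, momentum, magnetic field, total energy. -/
def mk (ρ : ℝ) (m B : Fin 3 → ℝ) (E : ℝ) : MHDState :=
  ![ρ, m 0, m 1, m 2, B 0, B 1, B 2, E]

/-- Density component. -/
def dens (U : MHDState) : ℝ := U 0

/-- Momentum components. -/
def mom (U : MHDState) : Fin 3 → ℝ := ![U 1, U 2, U 3]

/-- Magnetic field components. -/
def magB (U : MHDState) : Fin 3 → ℝ := ![U 4, U 5, U 6]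

/-- Total energy component. -/
def toten (U : MHDState) : ℝ := U 7

/-- Euclidean dot product on `ℝ³`. -/
def dot3 (a b : Fin 3 → ℝ) : ℝ := ∑ k, a k * b k

/-- Squared Euclidean norm on `ℝ³`. -/
def sq3 (a : Fin 3 → ℝ) : ℝ := dot3 a a

/-- Euclidean norm on `ℝ³`. -/
def norm3 (a : Fin 3 → ℝ) : ℝ := Real.sqrt (sq3 a)

/-- Velocity `v = m / ρ`. -/
def vel (U : MHDState) : Fin 3 → ℝ := fun k => mom U k / dens U

/-- Internal energy `𝓔(U) = E − (|m|²/ρ + |B|²)/2`. -/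
def intE (U : MHDState) : ℝ := toten U - (sq3 (mom U) / dens U + sq3 (magB U)) / 2

/-- Specific internal energy `e = 𝓔(U)/ρ`. -/
def specE (U : MHDState) : ℝ := intE U / dens U

/-- The admissible state set `𝒢`. -/
def Gset : Set MHDState := {U | 0 < dens U ∧ 0 < intE U}

/-- The set `𝒢_ρ` of states with positive density. -/
def Grho : Set MHDState := {U | 0 < dens U}

/-- Euclidean dot product on `ℝ⁸`. -/
def dot8 (U V : MHDState) : ℝ := ∑ i, U i * V i

/-- The vector `n* = (|v*|²/2, −v*, −B*, 1)`. -/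
def nstar (vs Bs : Fin 3 → ℝ) : MHDState :=
  mk (sq3 vs / 2) (fun k => -vs k) (fun k => -Bs k) 1

/-- The set `𝒢*`. -/
def GstarSet : Set MHDState :=
  {U | 0 < dens U ∧ ∀ vs Bs : Fin 3 → ℝ, 0 < dot8 U (nstar vs Bs) + sq3 Bs / 2}

/-- Equation of state assumption: for `ρ > 0`, `e > 0 ↔ p(ρ,e) > 0`. -/
def IsEOS (pfun : ℝ → ℝ → ℝ) : Prop :=
  ∀ ρ e : ℝ, 0 < ρ → (0 < e ↔ 0 < pfun ρ e)

/-- Pressure of a state, via the equation of state. -/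
def pres (pfun : ℝ → ℝ → ℝ) (U : MHDState) : ℝ := pfun (dens U) (specE U)

/-- Total pressure `p + |B|²/2`. -/
def ptot (pfun : ℝ → ℝ → ℝ) (U : MHDState) : ℝ := pres pfun U + sq3 (magB U) / 2

/-- The `i`-th flux `F_i(U)`. -/
def flux (pfun : ℝ → ℝ → ℝ) (i : Fin 3) (U : MHDState) : MHDState :=
  mk (dens U * vel U i)
    (fun k => dens U * vel U i * vel U k - magB U i * magB U k
      + ptot pfun U * (if k = i then 1 else 0))
    (fun k => vel U i * magB U k - magB U i * vel U k)
    (vel U i * (toten U + ptot pfun U) - magB U i * dot3 (vel U) (magB U))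

/-- Directional inner product `⟨ξ, w⟩ = Σ_{k<d} ξ_k w_k` for `ξ ∈ ℝ^d`, `w ∈ ℝ³`, `d ≤ 3`. -/
def dirDot {d : ℕ} (hd : d ≤ 3) (ξ : Fin d → ℝ) (w : Fin 3 → ℝ) : ℝ :=
  ∑ k, ξ k * w (Fin.castLE hd k)

/-- Directional flux `⟨ξ, F(U)⟩ = Σ_{i<d} ξ_i F_i(U)`. -/
def dirFlux (pfun : ℝ → ℝ → ℝ) {d : ℕ} (hd : d ≤ 3) (ξ : Fin d → ℝ) (U : MHDState) :
    MHDState :=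
  ∑ i, ξ i • flux pfun (Fin.castLE hd i) U

/-- `ξ` is a unit vector. -/
def unitVec {d : ℕ} (ξ : Fin d → ℝ) : Prop := (∑ k, (ξ k) ^ 2) = 1

/-- `𝒞_s(U) = p / (ρ √(2e))`. -/
def soundC (pfun : ℝ → ℝ → ℝ) (U : MHDState) : ℝ :=
  pres pfun U / (dens U * Real.sqrt (2 * specE U))

/-- `𝒞(U; ξ)`. -/
def waveC (pfun : ℝ → ℝ → ℝ) {d : ℕ} (hd : d ≤ 3) (ξ : Fin d → ℝ) (U : MHDState) : ℝ :=
  Real.sqrt ((soundC pfun U ^ 2 + sq3 (magB U) / dens U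
    + Real.sqrt ((soundC pfun U ^ 2 + sq3 (magB U) / dens U) ^ 2
      - 4 * soundC pfun U ^ 2 * dirDot hd ξ (magB U) ^ 2 / dens U)) / 2)

/-- Roe-type averaged velocity `v̄ = (√ρ v + √ρ̃ ṽ)/(√ρ + √ρ̃)`. -/
def roeV (U Ut : MHDState) : Fin 3 → ℝ := fun k =>
  (Real.sqrt (dens U) * vel U k + Real.sqrt (dens Ut) * vel Ut k)
    / (Real.sqrt (dens U) + Real.sqrt (dens Ut))

/-- `α_r(U, Ũ; ξ)`. -/
def alphaR (pfun : ℝ → ℝ → ℝ) {d : ℕ} (hd : d ≤ 3) (ξ : Fin d → ℝ) (U Ut : MHDState) : ℝ :=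
  max (dirDot hd ξ (vel U)) (dirDot hd ξ (roeV U Ut)) + waveC pfun hd ξ U
    + norm3 (magB U - magB Ut) / (Real.sqrt (dens U) + Real.sqrt (dens Ut))

/-- `α_l(U, Ũ; ξ)`. -/
def alphaL (pfun : ℝ → ℝ → ℝ) {d : ℕ} (hd : d ≤ 3) (ξ : Fin d → ℝ) (U Ut : MHDState) : ℝ :=
  min (dirDot hd ξ (vel U)) (dirDot hd ξ (roeV U Ut)) - waveC pfun hd ξ U
    - norm3 (magB U - magB Ut) / (Real.sqrt (dens U) + Real.sqrt (dens Ut))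

/-- `α_⋆(U, Ũ; ξ)`. -/
def alphaS (pfun : ℝ → ℝ → ℝ) {d : ℕ} (hd : d ≤ 3) (ξ : Fin d → ℝ) (U Ut : MHDState) : ℝ :=
  max (|dirDot hd ξ (vel U)|) (|dirDot hd ξ (roeV U Ut)|) + waveC pfun hd ξ U
    + norm3 (magB U - magB Ut) / (Real.sqrt (dens U) + Real.sqrt (dens Ut))

/-- The vector `θ(U, v*, B*) = 2^{−1/2}(B − B*, √ρ(v − v*), √(2ρe)) ∈ ℝ⁷`. -/
def theta (U : MHDState) (vs Bs : Fin 3 → ℝ) : Fin 7 → ℝ :=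
  ![(magB U 0 - Bs 0) / Real.sqrt 2,
    (magB U 1 - Bs 1) / Real.sqrt 2,
    (magB U 2 - Bs 2) / Real.sqrt 2,
    Real.sqrt (dens U) * (vel U 0 - vs 0) / Real.sqrt 2,
    Real.sqrt (dens U) * (vel U 1 - vs 1) / Real.sqrt 2,
    Real.sqrt (dens U) * (vel U 2 - vs 2) / Real.sqrt 2,
    Real.sqrt (2 * intE U) / Real.sqrt 2]

/-- `|θ|²`. -/
def thetaSq (U : MHDState) (vs Bs : Fin 3 → ℝ) : ℝ := ∑ k, theta U vs Bs k ^ 2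

/-- Godunov–Powell source vector `S(U) = (0, B, v, v·B)`. -/
def source (U : MHDState) : MHDState := mk 0 (magB U) (vel U) (dot3 (vel U) (magB U))

/-- HLL numerical flux with clamped wave speeds `σm ≤ 0 ≤ σp`. -/
def hllFlux (pfun : ℝ → ℝ → ℝ) {d : ℕ} (hd : d ≤ 3) (ξ : Fin d → ℝ)
    (Um Up : MHDState) (σm σp : ℝ) : MHDState :=
  (σp - σm)⁻¹ • (σp • dirFlux pfun hd ξ Um - σm • dirFlux pfun hd ξ Up
    + (σm * σp) • (Up - Um))

/-- HLL intermediate state `H(U⁻, U⁺; ξ)`. -/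
def hllMid (pfun : ℝ → ℝ → ℝ) {d : ℕ} (hd : d ≤ 3) (ξ : Fin d → ℝ)
    (Um Up : MHDState) (σm σp : ℝ) : MHDState :=
  (σp - σm)⁻¹ • (σp • Up - dirFlux pfun hd ξ Up - σm • Um + dirFlux pfun hd ξ Um)

/-- The quantity `α̂_j` of Theorem 2.3. -/
def alphaHat (pfun : ℝ → ℝ → ℝ) {d : ℕ} (hd : d ≤ 3) {N : ℕ}
    (s : Fin N → ℝ) (ξ : Fin N → Fin d → ℝ) (U : Fin N → MHDState) (j : Fin N) : ℝ :=
  max (dirDot hd (ξ j) (vel (U j)))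
      ((∑ i, s i)⁻¹ * ∑ i, s i * dirDot hd (fun k => ξ j k - ξ i k) (roeV (U j) (U i)))
  + waveC pfun hd (ξ j) (U j)
  + 2 * (∑ i, s i)⁻¹ * ∑ i, s i *
      (norm3 (magB (U j) - magB (U i)) / (Real.sqrt (dens (U j)) + Real.sqrt (dens (U i))))

def d1le3 : (1 : ℕ) ≤ 3 := by omega
def d2le3 : (2 : ℕ) ≤ 3 := by omega

/-- In one dimension the direction `ξ = 1`. -/
def xi1 : Fin 1 → ℝ := fun _ => 1

/-- The direction `ξ ∈ ℝ^d` padded with zeros to a vector of `ℝ³`. -/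
def extendDir {d : ℕ} (ξ : Fin d → ℝ) : Fin 3 → ℝ :=
  fun k => if h : (k : ℕ) < d then ξ ⟨k, h⟩ else 0

theorem dirDot_eq_dot3 {d : ℕ} (hd : d ≤ 3) (ξ : Fin d → ℝ) (w : Fin 3 → ℝ) :
    dirDot hd ξ w = dot3 (extendDir ξ) w := by
  interval_cases d <;> simp [dirDot, dot3, extendDir, Fin.sum_univ_succ]

theorem sq3_extendDir {d : ℕ} (hd : d ≤ 3) (ξ : Fin d → ℝ) :
    sq3 (extendDir ξ) = ∑ k, ξ k ^ 2 := by
  interval_cases d <;> simp [sq3, dot3, extendDir, Fin.sum_univ_succ, sq]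

theorem dirDot_sub {d : ℕ} (hd : d ≤ 3) (ξ ζ : Fin d → ℝ) (w : Fin 3 → ℝ) :
    dirDot hd (fun k => ξ k - ζ k) w = dirDot hd ξ w - dirDot hd ζ w := by
  simp [dirDot, sub_mul, sum_sub_distrib]

theorem sq3_nonneg (a : Fin 3 → ℝ) : 0 ≤ sq3 a := by
  unfold sq3 dot3
  exact sum_nonneg fun k _ => mul_self_nonneg (a k)

theorem norm3_nonneg (a : Fin 3 → ℝ) : 0 ≤ norm3 a := Real.sqrt_nonneg _

theorem norm3_sq (a : Fin 3 → ℝ) : norm3 a ^ 2 = sq3 a := Real.sq_sqrt (sq3_nonneg a)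

theorem dot3_sq_le (a b : Fin 3 → ℝ) : dot3 a b ^ 2 ≤ sq3 a * sq3 b := by
  have h := sum_mul_sq_le_sq_mul_sq univ a b
  simpa only [sq3, dot3, ← sq] using h

theorem abs_dot3_le (a b : Fin 3 → ℝ) : |dot3 a b| ≤ norm3 a * norm3 b := by
  refine abs_le_of_sq_le_sq ?_ (mul_nonneg (norm3_nonneg a) (norm3_nonneg b))
  rw [mul_pow, norm3_sq, norm3_sq]
  exact dot3_sq_le a b

theorem dot8_sum_smul {ι : Type*} (t : Finset ι) (c : ι → ℝ) (V : ι → MHDState) (W : MHDState) :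
    dot8 (∑ i ∈ t, c i • V i) W = ∑ i ∈ t, c i * dot8 (V i) W := by
  simp only [dot8, Finset.sum_apply, Pi.smul_apply, smul_eq_mul, sum_mul, mul_sum, mul_assoc]
  exact sum_comm

theorem dot8_smul (c : ℝ) (V W : MHDState) : dot8 (c • V) W = c * dot8 V W := by
  simp [dot8, mul_sum, mul_assoc]

theorem dot8_sub (V V' W : MHDState) : dot8 (V - V') W = dot8 V W - dot8 V' W := by
  simp [dot8, sub_mul, sum_sub_distrib]

/-- The quantity `|θ|² = ρ|v − v*|²/2 + |B − B*|²/2 + ρe`. -/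
def relEnergy (U : MHDState) (vs Bs : Fin 3 → ℝ) : ℝ :=
  dens U * sq3 (vel U - vs) / 2 + intE U + sq3 (magB U - Bs) / 2

theorem mom_eq {U : MHDState} (hU : 0 < dens U) (k : Fin 3) : mom U k = dens U * vel U k := by
  simp only [vel]
  field_simp

theorem toten_eq {U : MHDState} (hU : 0 < dens U) :
    toten U = intE U + (dens U * sq3 (vel U) + sq3 (magB U)) / 2 := by
  simp only [intE, sq3, dot3, Fin.sum_univ_three, vel]
  field_simp
  ring

theorem dot8_nstar (U : MHDState) (vs Bs : Fin 3 → ℝ) :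
    dot8 U (nstar vs Bs) = dens U * (sq3 vs / 2) - dot3 (mom U) vs - dot3 (magB U) Bs + toten U := by
  simp [dot8, nstar, mk, dens, mom, magB, toten, dot3, Fin.sum_univ_succ]
  ring

theorem dot8_nstar_add {U : MHDState} (hU : 0 < dens U) (vs Bs : Fin 3 → ℝ) :
    dot8 U (nstar vs Bs) + sq3 Bs / 2 = relEnergy U vs Bs := by
  rw [dot8_nstar, toten_eq hU, relEnergy]
  simp only [dot3, mom_eq hU, sq3, Fin.sum_univ_three, Pi.sub_apply]
  ring

theorem dot8_mk_nstar (ρ E : ℝ) (m B vs Bs : Fin 3 → ℝ) :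
    dot8 (mk ρ m B E) (nstar vs Bs) = ρ * (sq3 vs / 2) - dot3 m vs - dot3 B Bs + E := by
  simp [dot8, nstar, mk, dot3, Fin.sum_univ_succ]
  ring

/-- The part of `⟨ξ, F(U)⟩·n*` bounded by the wave speed. -/
def waveForm (pfun : ℝ → ℝ → ℝ) (n : Fin 3 → ℝ) (U : MHDState) (vs Bs : Fin 3 → ℝ) : ℝ :=
  pres pfun U * dot3 n (vel U - vs) + dot3 (magB U) (magB U - Bs) * dot3 n (vel U - vs)
    - dot3 n (magB U) * dot3 (vel U - vs) (magB U - Bs)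

theorem sum_flux_dot_nstar (pfun : ℝ → ℝ → ℝ) (n : Fin 3 → ℝ) {U : MHDState} (hU : 0 < dens U)
    (vs Bs : Fin 3 → ℝ) :
    dot3 n (fun i => dot8 (flux pfun i U) (nstar vs Bs)) =
      dot3 n (vel U) * (relEnergy U vs Bs - sq3 (magB U - Bs) / 2) + waveForm pfun n U vs Bs
        + dot3 n vs * (sq3 (magB U - Bs) / 2) - dot3 n vs * (sq3 Bs / 2)
        + dot3 n (magB U) * dot3 vs Bs := by
  simp only [flux, dot8_mk_nstar, toten_eq hU, relEnergy, waveForm, ptot]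
  simp [dot3, sq3, Fin.sum_univ_three]
  ring

theorem dirFlux_dot_nstar (pfun : ℝ → ℝ → ℝ) {d : ℕ} (hd : d ≤ 3) (ξ : Fin d → ℝ) {U : MHDState}
    (hU : 0 < dens U) (vs Bs : Fin 3 → ℝ) :
    dot8 (dirFlux pfun hd ξ U) (nstar vs Bs) =
      dirDot hd ξ (vel U) * (relEnergy U vs Bs - sq3 (magB U - Bs) / 2)
        + waveForm pfun (extendDir ξ) U vs Bs
        + dirDot hd ξ vs * (sq3 (magB U - Bs) / 2) - dirDot hd ξ vs * (sq3 Bs / 2)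
        + dirDot hd ξ (magB U) * dot3 vs Bs := by
  simp only [dirDot_eq_dot3]
  rw [← sum_flux_dot_nstar pfun _ hU, ← dirDot_eq_dot3 hd, dirFlux, dot8_sum_smul, dirDot]

theorem dens_dirFlux (pfun : ℝ → ℝ → ℝ) {d : ℕ} (hd : d ≤ 3) (ξ : Fin d → ℝ) (U : MHDState) :
    dens (dirFlux pfun hd ξ U) = dens U * dirDot hd ξ (vel U) := by
  simp only [dens, dirFlux, Finset.sum_apply, Pi.smul_apply, smul_eq_mul, dirDot, mul_sum]
  refine sum_congr rfl fun k _ => ?_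
  simp [flux, mk, dens]
  ring

/-- A positive semidefinite binary quadratic form with diagonal entries `X`, `Y`. -/
theorem binary_form_nonneg {X Y x r t k : ℝ} (hX : 0 ≤ X) (hY : 0 ≤ Y) (hr : 0 ≤ r)
    (ht : t ^ 2 ≤ k * r) (hXY : X * Y = k) : 0 ≤ X * x ^ 2 + Y * r + 2 * (x * t) := by
  have h1 : 0 ≤ X * x ^ 2 + Y * r := by positivity
  have h2 : (2 * (x * t)) ^ 2 ≤ (X * x ^ 2 + Y * r) ^ 2 := by
    have : x ^ 2 * t ^ 2 ≤ x ^ 2 * (k * r) := by gcongr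
    subst hXY
    nlinarith [sq_nonneg (X * x ^ 2 - Y * r)]
  have := abs_le_of_sq_le_sq' h2 h1
  linarith [this.1]

/-- The fast wave speed bounds the magnetosonic quadratic form; here `μ` is the larger root of
the characteristic polynomial. -/
theorem magnetosonic_form_le {n A W : Fin 3 → ℝ} {c μ : ℝ} (hn : sq3 n = 1)
    (hμ : c ^ 2 + sq3 A ≤ 2 * μ)
    (hroot : μ ^ 2 - (c ^ 2 + sq3 A) * μ + c ^ 2 * dot3 n A ^ 2 = 0) :
    c ^ 2 * dot3 n W ^ 2 + sq3 (dot3 n W • A - dot3 n A • W) ≤ μ * sq3 W := by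
  set a := dot3 n A with ha
  set w := dot3 n W with hw
  have hA := dot3_sq_le n A
  have hW := dot3_sq_le n W
  rw [hn, one_mul] at hA hW
  have hprod : (μ - c ^ 2 - (sq3 A - a ^ 2)) * (μ - a ^ 2) = a ^ 2 * (sq3 A - a ^ 2) := by
    linear_combination hroot
  have hpos : 0 ≤ a ^ 2 * (sq3 A - a ^ 2) := mul_nonneg (sq_nonneg _) (by linarith)
  have hXY : 0 ≤ μ - c ^ 2 - (sq3 A - a ^ 2) ∧ 0 ≤ μ - a ^ 2 := by
    constructor <;> nlinarith
  have hperp : (dot3 A W - a * w) ^ 2 ≤ (sq3 A - a ^ 2) * (sq3 W - w ^ 2) := by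
    have h := dot3_sq_le (A - a • n) (W - w • n)
    have e1 : sq3 (A - a • n) = sq3 A - a ^ 2 := by
      have : sq3 (A - a • n) = sq3 A - 2 * a * dot3 n A + a ^ 2 * sq3 n := by
        simp [sq3, dot3, Fin.sum_univ_three]; ring
      rw [this, hn, ← ha]; ring
    have e2 : sq3 (W - w • n) = sq3 W - w ^ 2 := by
      have : sq3 (W - w • n) = sq3 W - 2 * w * dot3 n W + w ^ 2 * sq3 n := by
        simp [sq3, dot3, Fin.sum_univ_three]; ring
      rw [this, hn, ← hw]; ring
    have e3 : dot3 (A - a • n) (W - w • n) = dot3 A W - a * w := by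
      have : dot3 (A - a • n) (W - w • n) =
          dot3 A W - a * dot3 n W - w * dot3 n A + a * w * sq3 n := by
        simp [sq3, dot3, Fin.sum_univ_three]; ring
      rw [this, hn, ← hw, ← ha]; ring
    rwa [e1, e2, e3] at h
  have hform := binary_form_nonneg (x := w) (r := sq3 W - w ^ 2) (t := a * (dot3 A W - a * w))
    (k := a ^ 2 * (sq3 A - a ^ 2)) hXY.1 hXY.2 (by linarith)
    (by rw [mul_pow, mul_assoc]; gcongr) hprod
  have e : sq3 (w • A - a • W) = w ^ 2 * sq3 A - 2 * a * w * dot3 A W + a ^ 2 * sq3 W := by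
    simp [sq3, dot3, Fin.sum_univ_three]; ring
  rw [e]
  nlinarith [hform]

theorem waveC_spec (pfun : ℝ → ℝ → ℝ) {d : ℕ} (hd : d ≤ 3) {ξ : Fin d → ℝ} (hξ : unitVec ξ)
    {U : MHDState} (hU : 0 < dens U) :
    soundC pfun U ^ 2 + sq3 (magB U) / dens U ≤ 2 * waveC pfun hd ξ U ^ 2 ∧
      (waveC pfun hd ξ U ^ 2) ^ 2
        - (soundC pfun U ^ 2 + sq3 (magB U) / dens U) * waveC pfun hd ξ U ^ 2
        + soundC pfun U ^ 2 * (dirDot hd ξ (magB U) ^ 2 / dens U) = 0 := by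
  set c := soundC pfun U
  set q := sq3 (magB U) / dens U with hq
  have hq0 : 0 ≤ q := div_nonneg (sq3_nonneg _) hU.le
  have hB : dirDot hd ξ (magB U) ^ 2 / dens U ≤ q := by
    rw [hq]
    gcongr
    have := dot3_sq_le (extendDir ξ) (magB U)
    rwa [sq3_extendDir hd, show ∑ k, ξ k ^ 2 = 1 from hξ, one_mul, ← dirDot_eq_dot3 hd] at this
  have hdisc : 0 ≤ (c ^ 2 + q) ^ 2 - 4 * c ^ 2 * dirDot hd ξ (magB U) ^ 2 / dens U := by
    have : c ^ 2 * (dirDot hd ξ (magB U) ^ 2 / dens U) ≤ c ^ 2 * q := by gcongr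
    rw [mul_div_assoc]
    nlinarith [sq_nonneg (c ^ 2 - q)]
  have hs := Real.sq_sqrt hdisc
  have hs0 := Real.sqrt_nonneg ((c ^ 2 + q) ^ 2 - 4 * c ^ 2 * dirDot hd ξ (magB U) ^ 2 / dens U)
  have hw : waveC pfun hd ξ U ^ 2 = (c ^ 2 + q
      + √((c ^ 2 + q) ^ 2 - 4 * c ^ 2 * dirDot hd ξ (magB U) ^ 2 / dens U)) / 2 :=
    Real.sq_sqrt (by positivity)
  rw [hw]
  refine ⟨by linarith, ?_⟩
  rw [mul_div_assoc] at hs ⊢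
  linear_combination hs / 4

theorem waveC_nonneg (pfun : ℝ → ℝ → ℝ) {d : ℕ} (hd : d ≤ 3) (ξ : Fin d → ℝ) (U : MHDState) :
    0 ≤ waveC pfun hd ξ U := Real.sqrt_nonneg _

theorem waveC_pos {pfun : ℝ → ℝ → ℝ} (hEOS : IsEOS pfun) {d : ℕ} (hd : d ≤ 3) {ξ : Fin d → ℝ}
    (hξ : unitVec ξ) {U : MHDState} (hU : U ∈ Gset) : 0 < waveC pfun hd ξ U := by
  obtain ⟨hρ, hE⟩ := hU
  have he : 0 < specE U := div_pos hE hρ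
  have hp : 0 < pres pfun U := (hEOS _ _ hρ).1 he
  have hc : 0 < soundC pfun U := by rw [soundC]; positivity
  have hq : 0 ≤ sq3 (magB U) / dens U := div_nonneg (sq3_nonneg _) hρ.le
  have h := (waveC_spec pfun hd hξ hρ).1
  refine (waveC_nonneg pfun hd ξ U).lt_of_ne fun h0 => ?_
  rw [← h0] at h
  nlinarith

theorem cauchy_schwarz_young {x y h g b C w : ℝ} (hg : 0 ≤ g) (hb : 0 ≤ b) (hw : 0 ≤ w)
    (hC : 0 ≤ C) (hgb : h ^ 2 ≤ g * b) (hle : x ^ 2 + g ≤ C ^ 2 * w) :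
    x * y + h ≤ C * ((w + (y ^ 2 + b)) / 2) := by
  have hcs : (x * y + h) ^ 2 ≤ (x ^ 2 + g) * (y ^ 2 + b) := by
    have : 2 * (x * y) * h ≤ x ^ 2 * b + y ^ 2 * g := by
      refine (abs_le_of_sq_le_sq' (b := x ^ 2 * b + y ^ 2 * g) ?_ (by positivity)).2
      have : x ^ 2 * y ^ 2 * h ^ 2 ≤ x ^ 2 * y ^ 2 * (g * b) := by gcongr
      linarith [sq_nonneg (x ^ 2 * b - y ^ 2 * g)]
    linarith
  have hM : 0 ≤ y ^ 2 + b := by positivity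
  refine (abs_le_of_sq_le_sq' (b := C * ((w + (y ^ 2 + b)) / 2)) ?_ (by positivity)).2
  linarith [mul_le_mul_of_nonneg_right hle hM,
    mul_nonneg (sq_nonneg C) (sq_nonneg (w - (y ^ 2 + b)))]

theorem waveForm_le (pfun : ℝ → ℝ → ℝ) {d : ℕ} (hd : d ≤ 3) {ξ : Fin d → ℝ} (hξ : unitVec ξ)
    {U : MHDState} (hU : U ∈ Gset) (vs Bs : Fin 3 → ℝ) :
    waveForm pfun (extendDir ξ) U vs Bs ≤ waveC pfun hd ξ U * relEnergy U vs Bs := by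
  obtain ⟨hρ, hE⟩ := hU
  have he : 0 < specE U := div_pos hE hρ
  have hn : sq3 (extendDir ξ) = 1 := (sq3_extendDir hd ξ).trans hξ
  obtain ⟨hμ, hroot⟩ := waveC_spec pfun hd hξ hρ
  have hC := waveC_nonneg pfun hd ξ U
  set n := extendDir ξ with hn_def
  set C := waveC pfun hd ξ U
  set c := soundC pfun U with hc
  set r := √(dens U) with hr
  have hr0 : 0 < r := Real.sqrt_pos.2 hρ
  have hr2 : r ^ 2 = dens U := Real.sq_sqrt hρ.le
  set T := √(2 * specE U) with hT
  have hT0 : 0 < T := Real.sqrt_pos.2 (by linarith)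
  have hT2 : T ^ 2 = 2 * specE U := Real.sq_sqrt (by linarith)
  have hp : pres pfun U = c * r ^ 2 * T := by
    rw [hc, soundC, hr2, ← hT]; field_simp
  have hI : intE U = r ^ 2 * T ^ 2 / 2 := by
    rw [hr2, hT2, specE]; field_simp
  set w := vel U - vs with hw
  set b := magB U - Bs with hb
  have key := magnetosonic_form_le (n := n) (A := r⁻¹ • magB U) (W := r • w) (c := c) (μ := C ^ 2) hn
  have e1 : sq3 (r⁻¹ • magB U) = sq3 (magB U) / dens U := by
    rw [← hr2]; simp [sq3, dot3, Fin.sum_univ_three]; field_simp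
  have e2 : dot3 n (r⁻¹ • magB U) ^ 2 = dirDot hd ξ (magB U) ^ 2 / dens U := by
    rw [← hr2, dirDot_eq_dot3, ← hn_def]; simp [dot3, Fin.sum_univ_three]; field_simp
  have e3 : dot3 n (r • w) = r * dot3 n w := by
    simp [dot3, Fin.sum_univ_three]; ring
  have e4 : dot3 n (r • w) • r⁻¹ • magB U - dot3 n (r⁻¹ • magB U) • r • w
      = dot3 n w • magB U - dot3 n (magB U) • w := by
    ext k; simp [dot3, Fin.sum_univ_three]; field_simp
  have e5 : sq3 (r • w) = r ^ 2 * sq3 w := by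
    simp [sq3, dot3, Fin.sum_univ_three]; ring
  rw [e4, e1, e2, e3, e5] at key
  specialize key hμ hroot
  set g := dot3 n w • magB U - dot3 n (magB U) • w with hg
  have eform : waveForm pfun n U vs Bs = (c * (r * dot3 n w)) * (r * T) + dot3 g b := by
    rw [waveForm, hp, ← hw, ← hb, hg]
    simp [dot3, Fin.sum_univ_three]; ring
  have hθ : relEnergy U vs Bs = (r ^ 2 * sq3 w + ((r * T) ^ 2 + sq3 b)) / 2 := by
    rw [relEnergy, hI, ← hr2, ← hw, ← hb]; ring
  rw [eform, hθ]
  refine cauchy_schwarz_young (sq3_nonneg g) (sq3_nonneg b)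
    (mul_nonneg (sq_nonneg r) (sq3_nonneg w)) hC (dot3_sq_le g b) (le_of_eq_of_le ?_ key)
  ring

theorem pair_estimate {n n' : Fin 3 → ℝ} (hn : sq3 n = 1) (hn' : sq3 n' = 1) {U U' : MHDState}
    (hU : U ∈ Gset) (hU' : U' ∈ Gset) (vs Bs : Fin 3 → ℝ) :
    (dot3 n vs - dot3 n' vs) * (sq3 (magB U - Bs) - sq3 (magB U' - Bs)) ≤
      (dot3 n (roeV U U') - dot3 n' (roeV U U')) * (sq3 (magB U - Bs) - sq3 (magB U' - Bs))
        + 4 * (norm3 (magB U - magB U') / (√(dens U) + √(dens U'))) *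
          (relEnergy U vs Bs + relEnergy U' vs Bs) := by
  obtain ⟨hρ, hE⟩ := hU
  obtain ⟨hρ', hE'⟩ := hU'
  have hβ := norm3_nonneg (magB U - magB U')
  unfold relEnergy
  set x := √(dens U) with hx
  set y := √(dens U') with hy
  have hx0 : 0 < x := Real.sqrt_pos.2 hρ
  have hy0 : 0 < y := Real.sqrt_pos.2 hρ'
  rw [← Real.sq_sqrt hρ.le, ← Real.sq_sqrt hρ'.le, ← hx, ← hy]
  set b := magB U - Bs with hb
  set b' := magB U' - Bs with hb'
  set w := vel U - vs with hw
  set w' := vel U' - vs with hw'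
  set u := x • w + y • w' with hu
  have hroe : ∀ m : Fin 3 → ℝ, dot3 m (roeV U U') - dot3 m vs = dot3 m u / (x + y) := by
    intro m
    simp only [dot3, roeV, hu, hw, hw', Fin.sum_univ_three, Pi.add_apply, Pi.smul_apply,
      Pi.sub_apply, smul_eq_mul, ← hx, ← hy]
    field_simp
    ring
  have hD : sq3 b - sq3 b' = dot3 (magB U - magB U') (b + b') := by
    simp only [sq3, dot3, hb, hb', Fin.sum_univ_three, Pi.add_apply, Pi.sub_apply]
    ring
  have hDle := abs_dot3_le (magB U - magB U') (b + b')
  have hdir : |dot3 n u - dot3 n' u| ≤ 2 * norm3 u := by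
    have h1 := abs_dot3_le n u
    have h2 := abs_dot3_le n' u
    have e1 : norm3 n = 1 := by rw [norm3, hn, Real.sqrt_one]
    have e2 : norm3 n' = 1 := by rw [norm3, hn', Real.sqrt_one]
    rw [e1, one_mul] at h1
    rw [e2, one_mul] at h2
    linarith [abs_sub (dot3 n u) (dot3 n' u)]
  have hpar : ∀ p q : Fin 3 → ℝ, sq3 (p + q) ≤ 2 * (sq3 p + sq3 q) := by
    intro p q
    have h := sq3_nonneg (p - q)
    simp only [sq3, dot3, Fin.sum_univ_three, Pi.add_apply, Pi.sub_apply] at h ⊢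
    linarith
  have hu2 : norm3 u ^ 2 ≤ 2 * (x ^ 2 * sq3 w + y ^ 2 * sq3 w') := by
    rw [norm3_sq]
    refine (hpar (x • w) (y • w')).trans (le_of_eq ?_)
    simp only [sq3, dot3, Fin.sum_univ_three, Pi.smul_apply, smul_eq_mul]
    ring
  have hb2 : norm3 (b + b') ^ 2 ≤ 2 * (sq3 b + sq3 b') := by
    rw [norm3_sq]
    exact hpar b b'
  have hprod : norm3 u * norm3 (b + b') ≤
      2 * (x ^ 2 * sq3 w / 2 + intE U + sq3 b / 2 + (y ^ 2 * sq3 w' / 2 + intE U' + sq3 b' / 2)) := by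
    nlinarith [sq_nonneg (norm3 u - norm3 (b + b'))]
  set Θ := x ^ 2 * sq3 w / 2 + intE U + sq3 b / 2 + (y ^ 2 * sq3 w' / 2 + intE U' + sq3 b' / 2)
  set β := norm3 (magB U - magB U')
  have habs : -((dot3 n u - dot3 n' u) * (sq3 b - sq3 b')) ≤ 4 * β * Θ := by
    refine (neg_le_abs _).trans ?_
    rw [abs_mul, hD]
    calc |dot3 n u - dot3 n' u| * |dot3 (magB U - magB U') (b + b')|
        ≤ (2 * norm3 u) * (β * norm3 (b + b')) :=
          mul_le_mul hdir hDle (abs_nonneg _) (by linarith [norm3_nonneg u])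
      _ = 2 * β * (norm3 u * norm3 (b + b')) := by ring
      _ ≤ 2 * β * (2 * Θ) := by gcongr
      _ = 4 * β * Θ := by ring
  have hdiv := div_le_div_of_nonneg_right habs (add_pos hx0 hy0).le
  have h1 := hroe n
  have h2 := hroe n'
  have e : (dot3 n vs - dot3 n' vs) * (sq3 b - sq3 b')
      = (dot3 n (roeV U U') - dot3 n' (roeV U U')) * (sq3 b - sq3 b')
        + -((dot3 n u - dot3 n' u) * (sq3 b - sq3 b')) / (x + y) := by
    have h3 : dot3 n vs - dot3 n' vs = dot3 n (roeV U U') - dot3 n' (roeV U U')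
        - (dot3 n u - dot3 n' u) / (x + y) := by
      rw [sub_div]; linarith
    rw [h3]; ring
  rw [e]
  have e' : 4 * (β / (x + y)) * Θ = 4 * β * Θ / (x + y) := by ring
  rw [e']
  linarith

theorem roeV_comm (U U' : MHDState) : roeV U U' = roeV U' U := by
  ext k
  simp only [roeV]
  rw [add_comm, add_comm √(dens U)]

theorem norm3_sub_comm (a b : Fin 3 → ℝ) : norm3 (a - b) = norm3 (b - a) := by
  simp only [norm3, sq3, dot3, Pi.sub_apply]
  congr 1
  exact sum_congr rfl fun k _ => by ring

section Averages

variable {ι : Type*} [Fintype ι]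

theorem sum_mul_average_eq_zero (s : ι → ℝ) (c : ℝ) (R : ι → ι → ℝ) (hR : ∀ j i, R j i = -R i j) :
    ∑ j, s j * (c * ∑ i, s i * R j i) = 0 := by
  have h : ∑ j, s j * (c * ∑ i, s i * R j i) = -∑ j, s j * (c * ∑ i, s i * R j i) := by
    simp only [mul_sum]
    conv_lhs => rw [sum_comm]
    simp only [← sum_neg_distrib]
    refine sum_congr rfl fun j _ => sum_congr rfl fun i _ => ?_
    rw [hR i j]
    ring
  linarith

/-- Summation of pairwise estimates against the weights `s`. -/
theorem sum_le_of_pairwise (s V Y Θ : ι → ℝ) (R β : ι → ι → ℝ) (hs : ∀ j, 0 ≤ s j)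
    (hS : 0 < ∑ j, s j) (hV : ∑ j, s j * V j = 0) (hR : ∀ j i, R j i = -R i j)
    (hβ : ∀ j i, β j i = β i j)
    (h : ∀ j i, (V j - V i) * (Y j - Y i) ≤ R j i * (Y j - Y i) + 4 * β j i * (Θ j + Θ i)) :
    ∑ j, s j * (V j * (Y j / 2)) ≤
      ∑ j, s j * (((∑ i, s i)⁻¹ * ∑ i, s i * R j i) * (Y j / 2)
        + (2 * (∑ i, s i)⁻¹ * ∑ i, s i * β j i) * Θ j) := by
  set S := ∑ i, s i with hSdef
  have hsum : ∑ j, ∑ i, s j * s i * ((V j - V i) * (Y j - Y i)) ≤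
      ∑ j, ∑ i, s j * s i * (R j i * (Y j - Y i) + 4 * β j i * (Θ j + Θ i)) :=
    sum_le_sum fun j _ => sum_le_sum fun i _ =>
      mul_le_mul_of_nonneg_left (h j i) (mul_nonneg (hs j) (hs i))
  have hsymm : ∀ f : ι → ι → ℝ, ∑ j, ∑ i, (f j i + f i j) = 2 * ∑ j, ∑ i, f j i := by
    intro f
    simp only [sum_add_distrib]
    rw [sum_comm (f := fun j i => f i j)]
    ring
  have hl : ∑ j, ∑ i, s j * s i * ((V j - V i) * (Y j - Y i)) =
      2 * (S * ∑ j, s j * (V j * Y j)) := by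
    have e : ∑ j, ∑ i, s j * s i * (V j * Y j - V i * Y j) = S * ∑ j, s j * (V j * Y j) := by
      have : ∀ j, ∑ i, s j * s i * (V j * Y j - V i * Y j) =
          S * (s j * (V j * Y j)) - s j * Y j * ∑ i, s i * V i := by
        intro j
        rw [hSdef, sum_mul, mul_sum, ← sum_sub_distrib]
        exact sum_congr rfl fun i _ => by ring
      simp only [this, hV, mul_zero, sub_zero, mul_sum]
    rw [← e, ← hsymm]
    exact sum_congr rfl fun j _ => sum_congr rfl fun i _ => by ring
  have hr : ∑ j, ∑ i, s j * s i * (R j i * (Y j - Y i) + 4 * β j i * (Θ j + Θ i)) =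
      2 * ∑ j, ∑ i, s j * s i * (R j i * Y j + 4 * β j i * Θ j) := by
    rw [← hsymm]
    refine sum_congr rfl fun j _ => sum_congr rfl fun i _ => ?_
    rw [hR i j, hβ i j]
    ring
  have hfin : ∑ j, s j * ((S⁻¹ * ∑ i, s i * R j i) * (Y j / 2)
        + (2 * S⁻¹ * ∑ i, s i * β j i) * Θ j) =
      (2 * S)⁻¹ * ∑ j, ∑ i, s j * s i * (R j i * Y j + 4 * β j i * Θ j) := by
    simp only [mul_sum, sum_mul, ← sum_add_distrib]
    refine sum_congr rfl fun j _ => sum_congr rfl fun i _ => ?_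
    field_simp
    ring
  have hfin' : ∑ j, s j * (V j * (Y j / 2)) = (2 * S)⁻¹ * (S * ∑ j, s j * (V j * Y j)) := by
    simp only [mul_sum]
    refine sum_congr rfl fun j _ => ?_
    field_simp
  rw [hfin, hfin']
  have : 0 < (2 * S)⁻¹ := by positivity
  exact mul_le_mul_of_nonneg_left (by linarith) this.le

end Averages

theorem mem_closure_GstarSet {U : MHDState} (hρ : 0 < dens U)
    (h : ∀ vs Bs : Fin 3 → ℝ, 0 ≤ dot8 U (nstar vs Bs) + sq3 Bs / 2) : U ∈ closure GstarSet := by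
  set e : MHDState := mk 0 0 0 1 with he
  have hlim : Filter.Tendsto (fun t : ℝ => U + t • e) (nhdsWithin 0 (Set.Ioi 0)) (nhds U) := by
    have hc : Continuous fun t : ℝ => U + t • e := by fun_prop
    have := hc.tendsto 0
    rw [zero_smul, add_zero] at this
    exact this.mono_left nhdsWithin_le_nhds
  refine mem_closure_of_tendsto hlim ?_
  filter_upwards [self_mem_nhdsWithin] with t ht
  have ht : 0 < t := ht
  refine ⟨?_, fun vs Bs => ?_⟩
  · simpa [dens, he, mk] using hρ
  · have : dot8 (U + t • e) (nstar vs Bs) = dot8 U (nstar vs Bs) + t := by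
      simp [dot8, he, mk, nstar, Fin.sum_univ_succ]
      ring
    rw [this]
    linarith [h vs Bs]

/-- Theorem 2.3 (multi-state estimate). -/
theorem multi_state_estimate (pfun : ℝ → ℝ → ℝ) (hEOS : IsEOS pfun)
    {d : ℕ} (hd1 : 1 ≤ d) (hd : d ≤ 3) {N : ℕ} (hN : 1 ≤ N)
    (s : Fin N → ℝ) (hs : ∀ j, 0 < s j)
    (ξ : Fin N → Fin d → ℝ) (hξ : ∀ j, unitVec (ξ j))
    (hsum : (∑ j, s j • ξ j) = 0)
    (U : Fin N → MHDState) (hU : ∀ j, U j ∈ Gset)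
    (α : Fin N → ℝ) (hα : ∀ j, alphaHat pfun hd s ξ U j ≤ α j) :
    0 < (∑ j, s j * α j) ∧
      ∀ Ubar : MHDState,
        Ubar = (∑ j, s j * α j)⁻¹ •
            (∑ j, s j • (α j • U j - dirFlux pfun hd (ξ j) (U j))) →
        Ubar ∈ Grho ∧
          (∀ vs Bs : Fin 3 → ℝ,
            dot8 Ubar (nstar vs Bs) + sq3 Bs / 2 ≥
              -(dot3 vs Bs * (∑ j, s j * α j)⁻¹ *
                (∑ j, s j * dirDot hd (ξ j) (magB (U j))))) ∧
          ((∑ j, s j * dirDot hd (ξ j) (magB (U j))) = 0 → Ubar ∈ closure GstarSet) := by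
  have : NeZero N := ⟨by omega⟩
  have hne : (univ : Finset (Fin N)).Nonempty := univ_nonempty
  have hS : 0 < ∑ j, s j := sum_pos (fun j _ => hs j) hne
  set R : Fin N → Fin N → ℝ :=
    fun j i => dirDot hd (fun k => ξ j k - ξ i k) (roeV (U j) (U i)) with hR
  set β : Fin N → Fin N → ℝ := fun j i =>
    norm3 (magB (U j) - magB (U i)) / (√(dens (U j)) + √(dens (U i))) with hβ
  set a : Fin N → ℝ := fun j => (∑ i, s i)⁻¹ * ∑ i, s i * R j i with ha
  set δ : Fin N → ℝ := fun j => 2 * (∑ i, s i)⁻¹ * ∑ i, s i * β j i with hδ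
  have hα' : ∀ j, max (dirDot hd (ξ j) (vel (U j))) (a j) + waveC pfun hd (ξ j) (U j) + δ j
      ≤ α j := hα
  have hδ0 : ∀ j, 0 ≤ δ j := fun j => by
    have : 0 ≤ ∑ i, s i * β j i := sum_nonneg fun i _ =>
      mul_nonneg (hs i).le (div_nonneg (norm3_nonneg _) (by positivity))
    simp only [hδ]
    positivity
  have hC : ∀ j, 0 < waveC pfun hd (ξ j) (U j) := fun j => waveC_pos hEOS hd (hξ j) (hU j)
  have hRanti : ∀ j i, R j i = -R i j := fun j i => by
    simp only [hR, dirDot_sub, roeV_comm (U j) (U i)]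
    ring
  have hβsymm : ∀ j i, β j i = β i j := fun j i => by
    simp only [hβ]
    rw [norm3_sub_comm, add_comm]
  have hαa : ∀ j, a j < α j := fun j => by
    linarith [hα' j, hδ0 j, hC j, le_max_right (dirDot hd (ξ j) (vel (U j))) (a j)]
  have hαv : ∀ j, dirDot hd (ξ j) (vel (U j)) < α j := fun j => by
    linarith [hα' j, hδ0 j, hC j, le_max_left (dirDot hd (ξ j) (vel (U j))) (a j)]
  have hA : 0 < ∑ j, s j * α j := by
    rw [← sum_mul_average_eq_zero s (∑ i, s i)⁻¹ R hRanti]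
    exact sum_lt_sum_of_nonempty hne fun j _ => mul_lt_mul_of_pos_left (hαa j) (hs j)
  have hdirsum : ∀ w, ∑ j, s j * dirDot hd (ξ j) w = 0 := fun w => by
    have : ∑ j, s j * dirDot hd (ξ j) w = dirDot hd (∑ j, s j • ξ j) w := by
      simp only [dirDot, Finset.sum_apply, Pi.smul_apply, smul_eq_mul, sum_mul, mul_sum, mul_assoc]
      exact sum_comm
    rw [this, hsum]
    simp [dirDot]
  refine ⟨hA, ?_⟩
  rintro Ubar rfl
  set A := ∑ j, s j * α j with hAdef
  have hdens : 0 < dens (A⁻¹ • ∑ j, s j • (α j • U j - dirFlux pfun hd (ξ j) (U j))) := by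
    have e : dens (A⁻¹ • ∑ j, s j • (α j • U j - dirFlux pfun hd (ξ j) (U j))) =
        A⁻¹ * ∑ j, s j * (dens (U j) * (α j - dirDot hd (ξ j) (vel (U j)))) := by
      have hf : ∀ j, dirFlux pfun hd (ξ j) (U j) 0 = dens (U j) * dirDot hd (ξ j) (vel (U j)) :=
        fun j => dens_dirFlux pfun hd (ξ j) (U j)
      simp only [dens, Pi.smul_apply, Finset.sum_apply, Pi.sub_apply, smul_eq_mul, hf]
      congr 1
      exact sum_congr rfl fun j _ => by ring
    rw [e]
    refine mul_pos (inv_pos.2 hA) (sum_pos (fun j _ => ?_) hne)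
    exact mul_pos (hs j) (mul_pos (hU j).1 (sub_pos.2 (hαv j)))
  have hmain : ∀ vs Bs : Fin 3 → ℝ,
      dot8 (A⁻¹ • ∑ j, s j • (α j • U j - dirFlux pfun hd (ξ j) (U j))) (nstar vs Bs)
        + sq3 Bs / 2 ≥
      -(dot3 vs Bs * A⁻¹ * ∑ j, s j * dirDot hd (ξ j) (magB (U j))) := by
    intro vs Bs
    set Θ : Fin N → ℝ := fun j => relEnergy (U j) vs Bs with hΘ
    set Y : Fin N → ℝ := fun j => sq3 (magB (U j) - Bs) with hY
    have hpair := sum_le_of_pairwise s (fun j => dirDot hd (ξ j) vs) Y Θ R β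
      (fun j => (hs j).le) hS (hdirsum vs) hRanti hβsymm fun j i => by
        have := pair_estimate ((sq3_extendDir hd (ξ j)).trans (hξ j))
          ((sq3_extendDir hd (ξ i)).trans (hξ i)) (hU j) (hU i) vs Bs
        simp only [← dirDot_eq_dot3 hd] at this
        rw [show R j i = _ from dirDot_sub hd (ξ j) (ξ i) (roeV (U j) (U i))]
        exact this
    have hterm : ∀ j, s j * (dirDot hd (ξ j) (vel (U j)) * (Θ j - Y j / 2)
        + waveForm pfun (extendDir (ξ j)) (U j) vs Bs + (a j * (Y j / 2) + δ j * Θ j))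
        ≤ s j * (α j * Θ j) := by
      intro j
      refine mul_le_mul_of_nonneg_left ?_ (hs j).le
      have hw := waveForm_le pfun hd (hξ j) (hU j) vs Bs
      have hY0 : 0 ≤ Y j / 2 := div_nonneg (sq3_nonneg _) two_pos.le
      have hK0 : 0 ≤ Θ j - Y j / 2 := by
        have h1 := mul_nonneg (hU j).1.le (sq3_nonneg (vel (U j) - vs))
        have h2 : 0 < intE (U j) := (hU j).2
        simp only [hΘ, hY, relEnergy]
        linarith
      have h1 := mul_le_mul_of_nonneg_right
        (le_max_left (dirDot hd (ξ j) (vel (U j))) (a j)) hK0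
      have h2 := mul_le_mul_of_nonneg_right
        (le_max_right (dirDot hd (ξ j) (vel (U j))) (a j)) hY0
      have h3 := mul_le_mul_of_nonneg_right (hα' j) (by linarith : 0 ≤ Θ j)
      linarith
    have hterms := sum_le_sum fun j (_ : j ∈ univ) => hterm j
    have hdot : ∀ j, s j * dot8 (α j • U j - dirFlux pfun hd (ξ j) (U j)) (nstar vs Bs) =
        s j * (α j * Θ j) - s j * α j * (sq3 Bs / 2)
        - s j * (dirDot hd (ξ j) (vel (U j)) * (Θ j - Y j / 2)
          + waveForm pfun (extendDir (ξ j)) (U j) vs Bs)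
        - s j * (dirDot hd (ξ j) vs * (Y j / 2))
        + s j * dirDot hd (ξ j) vs * (sq3 Bs / 2)
        - s j * dirDot hd (ξ j) (magB (U j)) * dot3 vs Bs := by
      intro j
      have h1 : dot8 (U j) (nstar vs Bs) = Θ j - sq3 Bs / 2 :=
        eq_sub_of_add_eq (dot8_nstar_add (hU j).1 vs Bs)
      rw [dot8_sub, dot8_smul, dirFlux_dot_nstar pfun hd (ξ j) (hU j).1, h1]
      ring
    rw [dot8_smul, dot8_sum_smul]
    simp only [hdot, sum_add_distrib, sum_sub_distrib, ← sum_mul, hdirsum, ← hAdef]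
    simp only [mul_add, sum_add_distrib] at hterms hpair ⊢
    set P := ∑ j, s j * dirDot hd (ξ j) (magB (U j))
    have hAinv : A⁻¹ * A = 1 := inv_mul_cancel₀ hA.ne'
    rw [ge_iff_le, ← sub_nonneg]
    refine le_of_le_of_eq (mul_nonneg (inv_pos.2 hA).le
      (sub_nonneg.2 (hterms.trans' (add_le_add_right hpair _)))) ?_
    linear_combination (sq3 Bs / 2) * hAinv
  refine ⟨hdens, hmain, fun h0 => mem_closure_GstarSet hdens fun vs Bs => ?_⟩
  have := hmain vs Bs
  rw [h0, mul_zero, neg_zero] at this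
  exact this
end MHD
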